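/- arXiv:1312.5019 — 2 statements merged into one kernel-verified Lean document; each statement's English description precedes it below -/
import Mathlib

section
/- The Maclaurin coefficients a_k of y (where y(v) = v/f(v), y(0) = √2/2) satisfy, for n ≥ 1, the recurrence: a_n = -(2/(n+2)) · [∑_{k+j+l=n, 0≤k,j,l<n} a_k a_j a_l + ∑_{k+j=n-1} a_k a_j], with a_0 = √2/2. -/
open Real Set Finset

open Filter Topology

/-- An analytic function vanishing to second order at `0` is `x ^ 2` times an analytic function. -/
lemma AnalyticAt.exists_eq_sq_mul {F : ℝ → ℝ} (hF : AnalyticAt ℝ F 0) (h0 : F 0 = 0)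
    (h1 : deriv F 0 = 0) :
    ∃ h : ℝ → ℝ, AnalyticAt ℝ h 0 ∧ h 0 = iteratedDeriv 2 F 0 / 2 ∧ ∀ x, F x = x ^ 2 * h x := by
  have hp := hF.hasFPowerSeriesAt.has_fpower_series_dslope_fslope.has_fpower_series_dslope_fslope
  refine ⟨dslope (dslope F 0) 0, ⟨_, hp⟩, ?_, fun x => ?_⟩
  · have h := hp.coeff_zero 1
    rw [← FormalMultilinearSeries.coeff.eq_1, FormalMultilinearSeries.coeff_fslope,
      FormalMultilinearSeries.coeff_fslope, FormalMultilinearSeries.coeff_ofScalars] at h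
    simpa using h.symm
  · have e₁ := sub_smul_dslope F 0 x
    have e₂ := sub_smul_dslope (dslope F 0) 0 x
    simp only [sub_zero, smul_eq_mul, dslope_same, h0, h1] at e₁ e₂
    rw [← e₁, ← e₂]
    ring

lemma hasDerivAt_sub_log_one_add {x : ℝ} (hx : -1 < x) :
    HasDerivAt (fun x : ℝ => x - log (1 + x)) (x / (1 + x)) x := by
  have hx' : 1 + x ≠ 0 := by linarith
  convert! (hasDerivAt_id x).sub (((hasDerivAt_id x).const_add 1).log hx') using 1
  simp only [id]
  field_simp
  ring

lemma exists_sub_log_one_add_eq_sq_mul :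
    ∃ h : ℝ → ℝ, AnalyticAt ℝ h 0 ∧ h 0 = 1 / 2 ∧ ∀ x, x - log (1 + x) = x ^ 2 * h x := by
  have hF : AnalyticAt ℝ (fun x : ℝ => x - log (1 + x)) 0 := by
    refine analyticAt_id.sub (AnalyticAt.fun_comp (g := log) ?_ (by fun_prop))
    exact analyticAt_log (by norm_num)
  have hd : deriv (fun x : ℝ => x - log (1 + x)) =ᶠ[𝓝 0] fun x => x / (1 + x) := by
    filter_upwards [Ioi_mem_nhds (show (-1 : ℝ) < 0 by norm_num)] with x hx
    exact (hasDerivAt_sub_log_one_add hx).deriv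
  obtain ⟨h, ha, h0, hh⟩ := hF.exists_eq_sq_mul (by simp) (by simp [hd.eq_of_nhds])
  refine ⟨h, ha, ?_, hh⟩
  have h2 : HasDerivAt (fun x : ℝ => x / (1 + x)) 1 0 := by
    convert! (hasDerivAt_id (0 : ℝ)).div ((hasDerivAt_id (0 : ℝ)).const_add 1) (by simp) using 1
    simp
  rw [h0, iteratedDeriv_succ, iteratedDeriv_one, hd.deriv_eq, h2.deriv]

lemma sub_log_one_add_strictMonoOn : StrictMonoOn (fun x : ℝ => x - log (1 + x)) (Ici 0) := by
  refine strictMonoOn_of_deriv_pos (convex_Ici 0) (fun x hx => ?_) fun x hx => ?_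
  · exact (hasDerivAt_sub_log_one_add (by grind)).continuousAt.continuousWithinAt
  · rw [interior_Ici, Set.mem_Ioi] at hx
    rw [(hasDerivAt_sub_log_one_add (by linarith)).deriv]
    positivity

lemma sub_log_one_add_strictAntiOn :
    StrictAntiOn (fun x : ℝ => x - log (1 + x)) (Ioc (-1) 0) := by
  refine strictAntiOn_of_deriv_neg (convex_Ioc (-1) 0) (fun x hx => ?_) fun x hx => ?_
  · exact (hasDerivAt_sub_log_one_add hx.1).continuousAt.continuousWithinAt
  · rw [interior_Ioc] at hx
    rw [(hasDerivAt_sub_log_one_add hx.1).deriv]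
    exact div_neg_of_neg_of_pos hx.2 (by linarith [hx.1])

lemma sub_log_one_add_pos {x : ℝ} (hx : -1 < x) (h0 : x ≠ 0) : 0 < x - log (1 + x) := by
  have := log_lt_sub_one_of_pos (show 0 < 1 + x by linarith) (by simpa using h0)
  linarith

lemma sign_mul_sqrt_sub_log_injOn :
    InjOn (fun x : ℝ => sign x * √(x - log (1 + x))) (Ioi (-1)) := by
  have hpos : ∀ x : ℝ, -1 < x → x ≠ 0 → 0 < √(x - log (1 + x)) :=
    fun x hx h0 => sqrt_pos.2 (sub_log_one_add_pos hx h0)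
  have hnn : ∀ x : ℝ, -1 < x → 0 ≤ x - log (1 + x) := fun x hx => by
    rcases eq_or_ne x 0 with rfl | h0
    · simp
    · exact (sub_log_one_add_pos hx h0).le
  intro x hx z hz hxz
  simp only [Set.mem_Ioi] at hx hz hxz
  rcases lt_trichotomy x 0 with h | rfl | h <;> rcases lt_trichotomy z 0 with h' | rfl | h'
  · rw [sign_of_neg h, sign_of_neg h'] at hxz
    exact sub_log_one_add_strictAntiOn.injOn ⟨hx, h.le⟩ ⟨hz, h'.le⟩
      ((sqrt_inj (hnn x hx) (hnn z hz)).1 (by linarith))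
  · have := hpos x hx h.ne
    simp [sign_of_neg h] at hxz
    linarith
  · have := hpos x hx h.ne
    have := hpos z hz h'.ne'
    rw [sign_of_neg h, sign_of_pos h'] at hxz
    linarith
  · have := hpos z hz h'.ne
    simp [sign_of_neg h'] at hxz
    linarith
  · rfl
  · have := hpos z hz h'.ne'
    simp [sign_of_pos h'] at hxz
    linarith
  · have := hpos x hx h.ne'
    have := hpos z hz h'.ne
    rw [sign_of_pos h, sign_of_neg h'] at hxz
    linarith
  · have := hpos x hx h.ne'
    simp [sign_of_pos h] at hxz
    linarith
  · rw [sign_of_pos h, sign_of_pos h'] at hxz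
    exact sub_log_one_add_strictMonoOn.injOn h.le h'.le
      ((sqrt_inj (hnn x hx) (hnn z hz)).1 (by linarith))

/-- The inverse `f` of `x ↦ sign x * √(x - log (1 + x))` and the quotient `v / f v`, extended by
`√2 / 2` at `0`, are analytic at `0`. -/
lemma analyticAt_inverse_and_quotient {f y : ℝ → ℝ}
    (hf : ∀ u : ℝ, f u ∈ Set.Ioi (-1 : ℝ) ∧ sign (f u) * √(f u - log (1 + f u)) = u)
    (hy : ∀ v : ℝ, y v = if v = 0 then √2 / 2 else v / f v) :
    AnalyticAt ℝ f 0 ∧ AnalyticAt ℝ y 0 ∧ ∀ v, v = f v * y v := by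
  obtain ⟨h, ha, h0, hh⟩ := exists_sub_log_one_add_eq_sq_mul
  set g : ℝ → ℝ := fun x => x * √(h x) with hg
  have hsqrt : AnalyticAt ℝ (fun x => √(h x)) 0 :=
    (ha.contDiffAt.sqrt (by rw [h0]; norm_num) : ContDiffAt ℝ ⊤ _ _).analyticAt
  have hga : AnalyticAt ℝ g 0 := analyticAt_id.mul hsqrt
  have hg_eq : ∀ x, sign x * √(x - log (1 + x)) = g x := fun x => by
    rw [hh, sqrt_mul (sq_nonneg x), sqrt_sq_eq_abs, ← mul_assoc]
    congr 1
    rcases lt_trichotomy x 0 with hx | rfl | hx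
    · simp [sign_of_neg hx, abs_of_neg hx]
    · simp
    · simp [sign_of_pos hx, abs_of_pos hx]
  have hg0 : g 0 = 0 := by simp [hg]
  have hgf : ∀ u, g (f u) = u := fun u => by rw [← hg_eq]; exact (hf u).2
  have hinj : InjOn g (Ioi (-1)) := by
    simpa only [hg_eq] using sign_mul_sqrt_sub_log_injOn
  have hf0 : f 0 = 0 := hinj (hf 0).1 (by simp) (by rw [hgf, hg0])
  have hg' : deriv g 0 ≠ 0 := by
    have := (hasDerivAt_id (0 : ℝ)).mul hsqrt.differentiableAt.hasDerivAt
    have h2 : deriv g 0 = √(h 0) := by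
      rw [show g = id * fun x => √(h x) from rfl]
      simpa using this.deriv
    rw [h2, h0]
    positivity
  have hfa : AnalyticAt ℝ f 0 := by
    have hi := hga.analyticAt_localInverse hg'
    have hr := HasStrictDerivAt.eventually_right_inverse hga.hasStrictDerivAt hg'
    have hl : HasStrictDerivAt.localInverse g _ 0 hga.hasStrictDerivAt hg' (g 0) = 0 :=
      HasStrictFDerivAt.localInverse_apply_image ..
    have hc := hi.continuousAt.eventually (p := fun x => -1 < x) (by
      rw [hl]; exact Ioi_mem_nhds (by norm_num))
    rw [hg0] at hi hr hc
    refine hi.congr ?_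
    filter_upwards [hr, hc] with u hu hu'
    exact hinj hu' (hf u).1 (by rw [hgf]; exact hu)
  have hy_eq : y = fun v => √(h (f v)) := by
    funext v
    rw [hy]
    split_ifs with hv
    · rw [hv, hf0, h0, sqrt_div_self', sqrt_div zero_le_one, sqrt_one]
    · have hv' := hgf v
      have : f v ≠ 0 := by
        intro h
        rw [h, hg0] at hv'
        exact hv hv'.symm
      rw [div_eq_iff this, mul_comm]
      exact hv'.symm
  refine ⟨hfa, ?_, fun v => ?_⟩
  · rw [hy_eq]
    exact AnalyticAt.fun_comp (g := fun x => √(h x)) (by rwa [hf0]) hfa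
  · rw [hy_eq]
    exact (hgf v).symm

lemma quotient_differential_equation {f y : ℝ → ℝ}
    (hf : ∀ u : ℝ, f u ∈ Set.Ioi (-1 : ℝ) ∧ sign (f u) * √(f u - log (1 + f u)) = u)
    (hfa : AnalyticAt ℝ f 0) (hya : AnalyticAt ℝ y 0) (hy0 : y 0 = √2 / 2)
    (hfy : ∀ v, v = f v * y v) :
    ∀ᶠ v in 𝓝 0, v * deriv y v = y v - 2 * (y v * y v * y v) - 2 * (v * (y v * y v)) := by
  filter_upwards [hfa.eventually_analyticAt, hya.eventually_analyticAt] with v hfv hyv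
  rcases eq_or_ne v 0 with rfl | hv
  · have : √2 * √2 = (2 : ℝ) := mul_self_sqrt zero_le_two
    rw [hy0]
    linear_combination √2 / 4 * this
  have hF : f v ≠ 0 := by
    intro h
    have := hfy v
    rw [h, zero_mul] at this
    exact hv this
  have hv1 : 1 + f v ≠ 0 := by linarith [(hf v).1.out]
  have hsq : (fun u => f u - log (1 + f u)) = fun u => u ^ 2 := by
    funext u
    have hu := (hf u).2
    rcases eq_or_ne (f u) 0 with h | h
    · rw [h] at hu ⊢
      simp at hu ⊢
      rw [← hu, zero_pow two_ne_zero]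
    · have hp := (sub_log_one_add_pos (hf u).1 h).le
      have hs : sign (f u) ^ 2 = 1 := by
        rcases sign_apply_eq_of_ne_zero _ h with e | e <;> rw [e] <;> norm_num
      calc _ = sign (f u) ^ 2 * √(f u - log (1 + f u)) ^ 2 := by rw [hs, sq_sqrt hp, one_mul]
        _ = u ^ 2 := by rw [← mul_pow, hu]
  have d₁ : f v / (1 + f v) * deriv f v = 2 * v := by
    have e := (hasDerivAt_sub_log_one_add (hf v).1).comp v hfv.differentiableAt.hasDerivAt
    rw [show ((fun x : ℝ => x - log (1 + x)) ∘ f) = fun u => u ^ 2 from hsq] at e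
    simpa using e.unique (hasDerivAt_pow 2 v)
  have d₂ : 1 = deriv f v * y v + f v * deriv y v := by
    have e := hfv.differentiableAt.hasDerivAt.mul hyv.differentiableAt.hasDerivAt
    rw [show f * y = fun u => u from funext fun u => (hfy u).symm] at e
    exact (hasDerivAt_id' v).unique e
  have d₃ : f v * deriv f v = 2 * v * (1 + f v) := by
    field_simp at d₁
    linarith
  have d₄ : deriv f v = 2 * y v * (1 + f v) := by
    apply mul_left_cancel₀ hF
    rw [d₃]
    linear_combination 2 * (1 + f v) * hfy v
  linear_combination (deriv y v + 2 * y v ^ 2) * hfy v - y v * d₂ - y v ^ 2 * d₄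

/-- The Taylor series at `0` of a real function, as a formal power series. -/
noncomputable def taylorPowerSeries (φ : ℝ → ℝ) : PowerSeries ℝ :=
  PowerSeries.mk fun k => iteratedDeriv k φ 0 / (Nat.factorial k)

lemma taylorPowerSeries_congr {φ ψ : ℝ → ℝ} (h : φ =ᶠ[𝓝 0] ψ) :
    taylorPowerSeries φ = taylorPowerSeries ψ := by
  ext k
  simp [taylorPowerSeries, h.iteratedDeriv_eq k]

lemma taylorPowerSeries_mul {φ ψ : ℝ → ℝ} (hφ : AnalyticAt ℝ φ 0) (hψ : AnalyticAt ℝ ψ 0) :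
    taylorPowerSeries (fun v => φ v * ψ v) = taylorPowerSeries φ * taylorPowerSeries ψ := by
  ext n
  rw [PowerSeries.coeff_mul, Finset.Nat.sum_antidiagonal_eq_sum_range_succ_mk]
  simp only [taylorPowerSeries, PowerSeries.coeff_mk]
  rw [iteratedDeriv_fun_mul hφ.contDiffAt hψ.contDiffAt, Finset.sum_div]
  refine Finset.sum_congr rfl fun i hi => ?_
  rw [Nat.cast_choose ℝ (Finset.mem_range_succ_iff.1 hi)]
  field_simp

lemma taylorPowerSeries_sub {φ ψ : ℝ → ℝ} (hφ : AnalyticAt ℝ φ 0) (hψ : AnalyticAt ℝ ψ 0) :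
    taylorPowerSeries (fun v => φ v - ψ v) = taylorPowerSeries φ - taylorPowerSeries ψ := by
  ext n
  simp only [taylorPowerSeries, PowerSeries.coeff_mk, map_sub]
  rw [iteratedDeriv_fun_sub hφ.contDiffAt hψ.contDiffAt, sub_div]

lemma taylorPowerSeries_const_mul (c : ℝ) (φ : ℝ → ℝ) :
    taylorPowerSeries (fun v => c * φ v) = PowerSeries.C c * taylorPowerSeries φ := by
  ext n
  simp [taylorPowerSeries, mul_div_assoc]

lemma taylorPowerSeries_id : taylorPowerSeries (fun v => v) = PowerSeries.X := by
  ext n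
  rcases n with _ | _ | n <;>
    simp [taylorPowerSeries, PowerSeries.coeff_X, iteratedDeriv_fun_id]

lemma taylorPowerSeries_deriv (φ : ℝ → ℝ) :
    taylorPowerSeries (deriv φ) = PowerSeries.derivative ℝ (taylorPowerSeries φ) := by
  ext n
  simp only [taylorPowerSeries, PowerSeries.coeff_mk, PowerSeries.coeff_derivative,
    ← iteratedDeriv_succ', Nat.factorial_succ]
  push_cast
  field_simp

lemma sum_range_triple_eq_coeff (a : ℕ → ℝ) (n : ℕ) :
    (∑ k ∈ range (n + 1), ∑ j ∈ range (n + 1), ∑ l ∈ range (n + 1),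
      if k + j + l = n then a k * a j * a l else 0) =
    PowerSeries.coeff n (PowerSeries.mk a * PowerSeries.mk a * PowerSeries.mk a) := by
  rw [mul_assoc, PowerSeries.coeff_mul, Finset.Nat.sum_antidiagonal_eq_sum_range_succ_mk]
  refine Finset.sum_congr rfl fun k hk => ?_
  rw [PowerSeries.coeff_mul, Finset.Nat.sum_antidiagonal_eq_sum_range_succ_mk, Finset.mul_sum]
  simp only [PowerSeries.coeff_mk]
  have hk' := Finset.mem_range.1 hk
  symm
  apply Finset.sum_subset_zero_on_sdiff
  · exact Finset.range_subset_range.2 (by omega)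
  · intro j hj
    simp only [Finset.mem_sdiff, Finset.mem_range] at hj
    exact Finset.sum_eq_zero fun l _ => if_neg (by omega)
  · intro j hj
    have hj' := Finset.mem_range.1 hj
    rw [Finset.sum_eq_single (n - k - j)]
    · rw [if_pos (by omega), mul_assoc]
    · exact fun l _ hl => if_neg (by omega)
    · exact fun h => absurd (Finset.mem_range.2 (by omega)) h

lemma sum_range_succ_triple (a : ℕ → ℝ) {n : ℕ} (hn : 1 ≤ n) :
    (∑ k ∈ range (n + 1), ∑ j ∈ range (n + 1), ∑ l ∈ range (n + 1),
      if k + j + l = n then a k * a j * a l else 0) =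
    (∑ k ∈ range n, ∑ j ∈ range n, ∑ l ∈ range n,
      if k + j + l = n then a k * a j * a l else 0) + 3 * (a 0 ^ 2 * a n) := by
  have hpair : ∀ F : ℕ → ℕ → ℝ, (∀ i j, i ≠ 0 ∨ j ≠ 0 → F i j = 0) →
      ∑ i ∈ range n, ∑ j ∈ range n, F i j = F 0 0 := fun F hF => by
    have h0 : 0 ∈ range n := Finset.mem_range.2 hn
    rw [Finset.sum_eq_single_of_mem 0 h0, Finset.sum_eq_single_of_mem 0 h0]
    · exact fun j _ hj => hF 0 j (.inr hj)
    · exact fun i _ hi => Finset.sum_eq_zero fun j _ => hF i j (.inl hi)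
  have h₁ := hpair (fun k j => if k + j + n = n then a k * a j * a n else 0)
    fun k j h => if_neg (by omega)
  have h₂ := hpair (fun k l => if k + n + l = n then a k * a n * a l else 0)
    fun k l h => if_neg (by omega)
  have h₃ := hpair (fun j l => if n + j + l = n then a n * a j * a l else 0)
    fun j l h => if_neg (by omega)
  have hne : ∀ i, i + n + n ≠ n ∧ n + i + n ≠ n ∧ n + n + i ≠ n := fun i => by omega
  simp only [Finset.sum_range_succ, Finset.sum_add_distrib, h₁, h₂, h₃, hne, if_false,
    Finset.sum_const_zero]
  simp
  ring

theorem stmt_15 (f : ℝ → ℝ)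
    (hf : ∀ u : ℝ, f u ∈ Set.Ioi (-1 : ℝ) ∧
      Real.sign (f u) * Real.sqrt (f u - Real.log (1 + f u)) = u)
    (y : ℝ → ℝ)
    (hy : ∀ v : ℝ, y v = if v = 0 then Real.sqrt 2 / 2 else v / f v)
    (a : ℕ → ℝ)
    (ha : ∀ k : ℕ, a k = iteratedDeriv k y 0 / (Nat.factorial k)) :
    a 0 = Real.sqrt 2 / 2 ∧
    ∀ n : ℕ, 1 ≤ n →
      a n = -(2 / ((n : ℝ) + 2)) *
        ((∑ k ∈ Finset.range n, ∑ j ∈ Finset.range n, ∑ l ∈ Finset.range n,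
            if k + j + l = n then a k * a j * a l else 0) +
         ∑ k ∈ Finset.range n, a k * a (n - 1 - k)) := by
  obtain ⟨hfa, hya, hfy⟩ := analyticAt_inverse_and_quotient hf hy
  have hy0 : y 0 = √2 / 2 := by simp [hy]
  have ha0 : a 0 = √2 / 2 := by simp [ha, hy0]
  refine ⟨ha0, fun n hn => ?_⟩
  have hT : taylorPowerSeries y = PowerSeries.mk a := by
    ext k
    simp [taylorPowerSeries, ha]
  have key := taylorPowerSeries_congr (quotient_differential_equation hf hfa hya hy0 hfy)
  have hid : AnalyticAt ℝ (fun v : ℝ => v) 0 := analyticAt_id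
  rw [taylorPowerSeries_mul hid hya.deriv, taylorPowerSeries_sub (by fun_prop) (by fun_prop),
    taylorPowerSeries_sub hya (by fun_prop), taylorPowerSeries_const_mul,
    taylorPowerSeries_const_mul, taylorPowerSeries_mul (by fun_prop) hya,
    taylorPowerSeries_mul hid (by fun_prop), taylorPowerSeries_mul hya hya,
    taylorPowerSeries_deriv, taylorPowerSeries_id, hT] at key
  have hc := congrArg (PowerSeries.coeff n) key
  obtain ⟨m, rfl⟩ := Nat.exists_eq_add_of_le' hn
  rw [map_sub, map_sub, PowerSeries.coeff_C_mul, PowerSeries.coeff_C_mul,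
    PowerSeries.coeff_succ_X_mul, PowerSeries.coeff_succ_X_mul, PowerSeries.coeff_derivative,
    ← sum_range_triple_eq_coeff, sum_range_succ_triple a hn, PowerSeries.coeff_mul,
    Finset.Nat.sum_antidiagonal_eq_sum_range_succ_mk] at hc
  simp only [PowerSeries.coeff_mk] at hc
  have h0 : a 0 ^ 2 = 1 / 2 := by
    rw [ha0, div_pow, sq_sqrt zero_le_two]
    norm_num
  rw [h0] at hc
  simp only [Nat.add_sub_cancel]
  push_cast at hc ⊢
  have hm : (m : ℝ) + 1 + 2 ≠ 0 := by positivity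
  field_simp
  linear_combination hc
end

section
/- As s → +∞, Γ(s+1) = (s/e)^s √s · [∑_{k=0}^n 2a_{2k} Γ(k + 1/2) s^{-k} + o(s^{-n})] for each fixed n ≥ 0, where a_k are the Maclaurin coefficients of y. -/
open Real Set Finset Filter Asymptotics

/-- The signed square root of `x - log (1 + x)`. -/
noncomputable def phaseRoot (x : ℝ) : ℝ := Real.sign x * √(x - Real.log (1 + x))

lemma phase_lt_of_mul_sub_nonneg {a b : ℝ} (ha : -1 < a) (hb : -1 < b) (hab : a ≠ b)
    (h : 0 ≤ a * (b - a)) : a - Real.log (1 + a) < b - Real.log (1 + b) := by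
  have ha' : 0 < 1 + a := by linarith
  have hb' : 0 < 1 + b := by linarith
  have hne : (1 + b) / (1 + a) ≠ 1 := by
    rw [Ne, div_eq_one_iff_eq ha'.ne']
    exact fun h => hab (by linarith)
  have hlog := Real.log_lt_sub_one_of_pos (div_pos hb' ha') hne
  rw [Real.log_div hb'.ne' ha'.ne'] at hlog
  have : (b - a) - ((1 + b) / (1 + a) - 1) = a * (b - a) / (1 + a) := by
    field_simp
    ring
  have : 0 ≤ a * (b - a) / (1 + a) := by positivity
  linarith

lemma phase_pos {x : ℝ} (hx : -1 < x) (h0 : x ≠ 0) : 0 < x - Real.log (1 + x) := by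
  simpa using phase_lt_of_mul_sub_nonneg (by norm_num : (-1 : ℝ) < 0) hx h0.symm (by simp)

lemma phaseRoot_sq {x : ℝ} (hx : -1 < x) : phaseRoot x ^ 2 = x - Real.log (1 + x) := by
  rcases eq_or_ne x 0 with rfl | h0
  · simp [phaseRoot]
  · rw [phaseRoot, mul_pow, Real.sq_sqrt (phase_pos hx h0).le]
    rcases Real.sign_apply_eq_of_ne_zero x h0 with h | h <;> simp [h]

lemma phaseRoot_mul_self_pos {x : ℝ} (hx : -1 < x) (h0 : x ≠ 0) : 0 < x * phaseRoot x := by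
  have := Real.sqrt_pos.2 (phase_pos hx h0)
  rw [phaseRoot, ← mul_assoc, mul_comm x]
  exact mul_pos (Real.sign_mul_pos_of_ne_zero x h0) this

lemma phaseRoot_ne_zero {x : ℝ} (hx : -1 < x) (h0 : x ≠ 0) : phaseRoot x ≠ 0 :=
  right_ne_zero_of_mul (phaseRoot_mul_self_pos hx h0).ne'

@[simp]
lemma phaseRoot_zero : phaseRoot 0 = 0 := by simp [phaseRoot]

lemma injOn_phaseRoot : InjOn phaseRoot (Ioi (-1)) := by
  intro a ha b hb hab
  have ha : -1 < a := ha
  have hb : -1 < b := hb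
  by_contra hne
  rcases eq_or_ne a 0 with rfl | ha0
  · exact phaseRoot_ne_zero hb (Ne.symm hne) (by rw [← hab, phaseRoot_zero])
  rcases eq_or_ne b 0 with rfl | hb0
  · exact phaseRoot_ne_zero ha hne (by rw [hab, phaseRoot_zero])
  have h1 := phaseRoot_mul_self_pos ha ha0
  have h2 := phaseRoot_mul_self_pos hb hb0
  rw [← hab] at h2
  have hmul : 0 < a * b := by
    have : 0 < (a * b) * phaseRoot a ^ 2 := by nlinarith [mul_pos h1 h2]
    exact pos_of_mul_pos_left this (sq_nonneg _)
  have hphase : a - Real.log (1 + a) = b - Real.log (1 + b) := by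
    rw [← phaseRoot_sq ha, ← phaseRoot_sq hb, hab]
  rcases le_or_gt 0 (a * (b - a)) with h | h
  · exact (phase_lt_of_mul_sub_nonneg ha hb hne h).ne hphase
  · refine (phase_lt_of_mul_sub_nonneg hb ha (Ne.symm hne) ?_).ne hphase.symm
    by_contra! h'
    nlinarith [sq_nonneg (a - b), mul_pos (neg_pos.2 h) (neg_pos.2 h')]

lemma hasDerivAt_phaseRoot {x : ℝ} (hx : -1 < x) (h0 : x ≠ 0) :
    HasDerivAt phaseRoot (x / ((1 + x) * (2 * phaseRoot x))) x := by
  have hx' : 1 + x ≠ 0 := by linarith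
  have hsign : phaseRoot =ᶠ[nhds x] fun t => Real.sign x * √(t - Real.log (1 + t)) := by
    rcases h0.lt_or_gt with h | h
    · filter_upwards [Iio_mem_nhds h] with t ht
      rw [phaseRoot, Real.sign_of_neg h, Real.sign_of_neg ht]
    · filter_upwards [Ioi_mem_nhds h] with t ht
      rw [phaseRoot, Real.sign_of_pos h, Real.sign_of_pos ht]
  have hd : HasDerivAt (fun t : ℝ => t - Real.log (1 + t)) (1 - 1 / (1 + x)) x :=
    (hasDerivAt_id x).sub (((hasDerivAt_id x).const_add 1).log hx')
  have hs := (Real.sqrt_pos.2 (phase_pos hx h0)).ne'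
  convert! ((hd.sqrt (phase_pos hx h0).ne').const_mul (Real.sign x)).congr_of_eventuallyEq hsign
    using 1
  rw [phaseRoot]
  rcases Real.sign_apply_eq_of_ne_zero x h0 with h | h <;> rw [h] <;> field_simp <;> ring

lemma AnalyticAt.dslope_self {g : ℝ → ℝ} {z : ℝ} (hg : AnalyticAt ℝ g z) :
    AnalyticAt ℝ (dslope g z) z :=
  hg.hasFPowerSeriesAt.has_fpower_series_dslope_fslope.analyticAt

/-- Near `0`, the signed root is `x` times an analytic function with value `√2 / 2` at `0`. -/
lemma exists_analyticAt_phaseRoot_eq :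
    ∃ k : ℝ → ℝ, AnalyticAt ℝ k 0 ∧ k 0 = √2 / 2 ∧ ∀ᶠ x in nhds 0, phaseRoot x = x * k x := by
  set φ : ℝ → ℝ := fun x => x - Real.log (1 + x) with hφ
  have hφa : AnalyticAt ℝ φ 0 :=
    analyticAt_id.sub ((analyticAt_const.add analyticAt_id).log (by simp))
  have hderiv : deriv φ =ᶠ[nhds 0] fun x => 1 - (1 + x)⁻¹ := by
    filter_upwards [Ioi_mem_nhds (show (-1 : ℝ) < 0 by norm_num)] with x hx
    have hx' : 1 + x ≠ 0 := by linarith [mem_Ioi.1 hx]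
    have hd : HasDerivAt φ (1 - 1 / (1 + x)) x :=
      (hasDerivAt_id x).sub (((hasDerivAt_id x).const_add 1).log hx')
    simpa using hd.deriv
  have hd0 : deriv φ 0 = 0 := by simpa using hderiv.eq_of_nhds
  have hdd : iteratedDeriv 2 φ 0 = 1 := by
    rw [iteratedDeriv_succ, iteratedDeriv_one, hderiv.deriv_eq]
    simpa using ((((hasDerivAt_id (0 : ℝ)).const_add 1).inv (by simp)).const_sub 1).deriv
  have hseries := hφa.hasFPowerSeriesAt.has_fpower_series_dslope_fslope
  set q := dslope (dslope φ 0) 0 with hq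
  have hqa : AnalyticAt ℝ q 0 := hφa.dslope_self.dslope_self
  have hq0 : q 0 = 1 / 2 := by
    rw [hq, ← hseries.has_fpower_series_dslope_fslope.coeff_zero 1]
    change FormalMultilinearSeries.coeff _ 0 = _
    rw [FormalMultilinearSeries.coeff_fslope, FormalMultilinearSeries.coeff_fslope,
      FormalMultilinearSeries.coeff_ofScalars]
    norm_num [hdd]
  have hmul : ∀ x, φ x = x ^ 2 * q x := by
    intro x
    have h1 := sub_smul_dslope φ 0 x
    have h2 := sub_smul_dslope (dslope φ 0) 0 x
    rw [dslope_same, hd0] at h2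
    simp only [sub_zero, smul_eq_mul] at h1 h2
    rw [sq, mul_assoc, h2, h1]
    simp [hφ]
  refine ⟨fun x => √(q x), ?_, ?_, ?_⟩
  · have hc := (Real.contDiffAt_sqrt (n := ⊤) (x := q 0) (by rw [hq0]; norm_num))
    exact hc.analyticAt.comp hqa
  · simp only [hq0]
    rw [one_div, Real.sqrt_inv]
    field_simp
    norm_num
  · filter_upwards [hqa.continuousAt.eventually_const_lt (by rw [hq0]; norm_num : 0 < q 0)]
      with x hx
    rw [phaseRoot, show x - Real.log (1 + x) = x ^ 2 * q x from hmul x,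
      Real.sqrt_mul (sq_nonneg x), Real.sqrt_sq_eq_abs, ← mul_assoc]
    congr 1
    rcases lt_trichotomy x 0 with h | h | h
    · simp [Real.sign_of_neg h, abs_of_neg h]
    · simp [h]
    · simp [Real.sign_of_pos h, abs_of_pos h]

lemma analyticAt_rightInverse_phaseRoot {f : ℝ → ℝ} (hf : ∀ u, -1 < f u)
    (hinv : ∀ u, phaseRoot (f u) = u) : AnalyticAt ℝ f 0 ∧ deriv f 0 = √2 := by
  obtain ⟨k, hk, hk0, heq⟩ := exists_analyticAt_phaseRoot_eq
  have hG : AnalyticAt ℝ phaseRoot 0 := (analyticAt_id.mul hk).congr (heq.mono fun x hx => hx.symm)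
  have hG' : deriv phaseRoot 0 = √2 / 2 := by
    rw [EventuallyEq.deriv_eq heq]
    have hd : HasDerivAt (fun x => x * k x) (1 * k 0 + 0 * deriv k 0) 0 :=
      (hasDerivAt_id (0 : ℝ)).mul hk.differentiableAt.hasDerivAt
    simpa [hk0] using hd.deriv
  have hne : deriv phaseRoot 0 ≠ 0 := by rw [hG']; positivity
  have hloc := hG.analyticAt_localInverse hne
  have hder := (hG.hasStrictDerivAt.to_localInverse hne).hasDerivAt
  have hright := hG.hasStrictDerivAt.eventually_right_inverse hne
  have hval : hG.hasStrictDerivAt.localInverse _ _ _ hne (phaseRoot 0) = 0 :=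
    HasStrictFDerivAt.localInverse_apply_image ..
  have hgt := hloc.continuousAt.eventually_const_lt (by rw [hval]; norm_num : (-1 : ℝ) < _)
  rw [phaseRoot_zero] at hloc hder hright hgt
  have hfe : hG.hasStrictDerivAt.localInverse _ _ _ hne =ᶠ[nhds 0] f := by
    filter_upwards [hright, hgt] with u hu hu'
    exact injOn_phaseRoot hu' (hf u) (hu.trans (hinv u).symm)
  refine ⟨hloc.congr hfe, ?_⟩
  rw [← hfe.deriv_eq, hder.deriv, hG']
  field_simp
  norm_num

lemma analyticAt_div_rightInverse {f y : ℝ → ℝ} (hf : ∀ u, -1 < f u)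
    (hinv : ∀ u, phaseRoot (f u) = u) (hy : ∀ v, y v = if v = 0 then √2 / 2 else v / f v) :
    AnalyticAt ℝ y 0 := by
  obtain ⟨hfa, hfd⟩ := analyticAt_rightInverse_phaseRoot hf hinv
  have hf0 : f 0 = 0 := injOn_phaseRoot (hf 0) (by simp) (by rw [hinv, phaseRoot_zero])
  have : y = fun v => (dslope f 0 v)⁻¹ := by
    funext v
    rw [hy]
    split_ifs with h
    · rw [h, dslope_same, hfd]
      field_simp
      norm_num
    · simp [dslope_of_ne _ h, slope_def_field, hf0]
  rw [this]
  refine hfa.dslope_self.inv ?_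
  rw [dslope_same, hfd]
  positivity

lemma AnalyticAt.isBigO_sub_maclaurin {y : ℝ → ℝ} (hy : AnalyticAt ℝ y 0) (m : ℕ) :
    (fun u => y u - ∑ k ∈ range m, iteratedDeriv k y 0 / k.factorial * u ^ k)
      =O[nhds 0] fun u => |u| ^ m := by
  simpa [FormalMultilinearSeries.partialSum, FormalMultilinearSeries.ofScalars_apply_eq,
    mul_comm]
    using hy.hasFPowerSeriesAt.isBigO_sub_partialSum_pow m

lemma integrable_pow_mul_exp_neg_mul_sq {s : ℝ} (hs : 0 < s) (m : ℕ) :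
    MeasureTheory.Integrable fun u : ℝ => u ^ m * exp (-s * u ^ 2) := by
  simpa using integrable_rpow_mul_exp_neg_mul_sq hs
    (show (-1 : ℝ) < m by linarith [m.cast_nonneg (α := ℝ)])

lemma integral_abs_pow_mul_exp_neg_mul_sq {s : ℝ} (hs : 0 < s) (m : ℕ) :
    ∫ u : ℝ, |u| ^ m * exp (-s * u ^ 2) =
      s ^ (-((m : ℝ) + 1) / 2) * Real.Gamma (((m : ℝ) + 1) / 2) := by
  have h := integral_comp_abs (f := fun u => u ^ m * exp (-s * u ^ 2))
  simp only [sq_abs] at h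
  have h' := integral_rpow_mul_exp_neg_mul_rpow (p := 2) (q := m) two_pos
    (by linarith [m.cast_nonneg (α := ℝ)]) hs
  simp only [Real.rpow_natCast, Real.rpow_two] at h'
  rw [h, h']
  ring

lemma integral_odd_pow_mul_exp_neg_mul_sq (s : ℝ) (k : ℕ) :
    ∫ u : ℝ, u ^ (2 * k + 1) * exp (-s * u ^ 2) = 0 := by
  have h := MeasureTheory.integral_neg_eq_self
    (fun u : ℝ => u ^ (2 * k + 1) * exp (-s * u ^ 2)) MeasureTheory.volume
  simp only [Odd.neg_pow ⟨k, rfl⟩, neg_sq, neg_mul, MeasureTheory.integral_neg] at h ⊢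
  linarith

lemma sqrt_mul_integral_even_pow_mul_exp_neg_mul_sq {s : ℝ} (hs : 0 < s) (k : ℕ) :
    √s * ∫ u : ℝ, u ^ (2 * k) * exp (-s * u ^ 2) = Real.Gamma ((k : ℝ) + 1 / 2) / s ^ k := by
  have h := integral_abs_pow_mul_exp_neg_mul_sq hs (2 * k)
  simp only [(even_two_mul k).pow_abs] at h
  rw [h, Real.sqrt_eq_rpow, ← mul_assoc, ← Real.rpow_add hs]
  push_cast
  rw [show (1 / 2 : ℝ) + -(2 * k + 1) / 2 = -k by ring,
    show (2 * (k : ℝ) + 1) / 2 = k + 1 / 2 by ring, Real.rpow_neg hs.le, Real.rpow_natCast]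
  ring

lemma integrable_polynomial_mul_exp_neg_mul_sq {s : ℝ} (hs : 0 < s) (c : ℕ → ℝ) (m : ℕ) :
    MeasureTheory.Integrable fun u : ℝ =>
      (∑ k ∈ range m, c k * u ^ k) * exp (-s * u ^ 2) := by
  simp only [Finset.sum_mul, mul_assoc]
  exact MeasureTheory.integrable_finsetSum _ fun k _ =>
    (integrable_pow_mul_exp_neg_mul_sq hs k).const_mul (c k)

lemma sqrt_mul_integral_polynomial_mul_exp_neg_mul_sq {s : ℝ} (hs : 0 < s) (c : ℕ → ℝ) (n : ℕ) :
    √s * ∫ u : ℝ, (∑ k ∈ range (2 * n + 1), c k * u ^ k) * exp (-s * u ^ 2) =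
      ∑ k ∈ range (n + 1), c (2 * k) * Real.Gamma ((k : ℝ) + 1 / 2) / s ^ k := by
  simp only [Finset.sum_mul, mul_assoc]
  rw [MeasureTheory.integral_finsetSum _ fun k _ =>
    (integrable_pow_mul_exp_neg_mul_sq hs k).const_mul (c k)]
  simp only [MeasureTheory.integral_const_mul]
  induction n with
  | zero =>
    have := sqrt_mul_integral_even_pow_mul_exp_neg_mul_sq hs 0
    simp only [mul_zero] at this
    simp only [mul_zero, zero_add, Finset.sum_range_one]
    rw [mul_left_comm, this]
    ring
  | succ n ih =>
    have heven := sqrt_mul_integral_even_pow_mul_exp_neg_mul_sq hs (n + 1)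
    rw [Finset.sum_range_succ _ (n + 1), ← ih, show 2 * (n + 1) + 1 = 2 * n + 1 + 1 + 1 by ring,
      Finset.sum_range_succ, Finset.sum_range_succ, integral_odd_pow_mul_exp_neg_mul_sq,
      show 2 * n + 1 + 1 = 2 * (n + 1) by ring, mul_add, mul_left_comm _ (c (2 * (n + 1))), heven]
    ring

lemma Gamma_add_one_eq_integral_phase {s : ℝ} (hs : 0 < s) :
    MeasureTheory.IntegrableOn (fun x => exp (-s * (x - Real.log (1 + x)))) (Ioi (-1)) ∧
      Real.Gamma (s + 1) =
        s * s ^ s * exp (-s) * ∫ x in Ioi (-1), exp (-s * (x - Real.log (1 + x))) := by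
  have himage : (fun x => s * (1 + x)) '' Set.Ioi (-1) = Set.Ioi 0 := by
    ext t
    constructor
    · rintro ⟨x, hx, rfl⟩
      exact mul_pos hs (by linarith [mem_Ioi.1 hx])
    · intro ht
      refine ⟨t / s - 1, ?_, by field_simp; ring⟩
      have : 0 < t / s := div_pos ht hs
      exact mem_Ioi.2 (by linarith)
  have hderiv : ∀ x ∈ Ioi (-1 : ℝ),
      HasDerivWithinAt (fun x => s * (1 + x)) s (Ioi (-1)) x := fun x _ => by
    simpa using (((hasDerivAt_id x).const_add 1).const_mul s).hasDerivWithinAt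
  have hinj : InjOn (fun x => s * (1 + x)) (Ioi (-1)) := fun a _ b _ h => by
    simpa [hs.ne'] using h
  have hpoint : ∀ x ∈ Ioi (-1 : ℝ),
      |s| • (exp (-(s * (1 + x))) * (s * (1 + x)) ^ (s + 1 - 1)) =
        s * s ^ s * exp (-s) * exp (-s * (x - Real.log (1 + x))) := by
    intro x hx
    have hx' : 0 < 1 + x := by linarith [mem_Ioi.1 hx]
    rw [abs_of_pos hs, smul_eq_mul, add_sub_cancel_right, Real.mul_rpow hs.le hx'.le,
      Real.rpow_def_of_pos hx',
      show -s * (x - Real.log (1 + x)) = -(s * (1 + x)) + s + Real.log (1 + x) * s by ring,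
      Real.exp_add, Real.exp_add, Real.exp_neg s]
    field_simp
  constructor
  · have h := Real.GammaIntegral_convergent (show 0 < s + 1 by linarith)
    rw [← himage, MeasureTheory.integrableOn_image_iff_integrableOn_abs_deriv_smul
      measurableSet_Ioi hderiv hinj,
      MeasureTheory.integrableOn_congr_fun hpoint measurableSet_Ioi] at h
    have hc : s * s ^ s * exp (-s) ≠ 0 := by positivity
    exact (MeasureTheory.integrable_const_mul_iff hc.isUnit _).1 h
  · rw [Real.Gamma_eq_integral (by linarith), ← himage,
      MeasureTheory.integral_image_eq_integral_abs_deriv_smul measurableSet_Ioi hderiv hinj,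
      MeasureTheory.setIntegral_congr_fun measurableSet_Ioi hpoint, MeasureTheory.integral_const_mul]

lemma Gamma_add_one_div_eq {s : ℝ} (hs : 0 < s) :
    Real.Gamma (s + 1) / ((s / Real.exp 1) ^ s * √s) =
      √s * ∫ x in Ioi (-1), exp (-s * (x - Real.log (1 + x))) := by
  rw [(Gamma_add_one_eq_integral_phase hs).2, Real.div_rpow hs.le (exp_pos 1).le, Real.exp_one_rpow,
    Real.exp_neg]
  have : √s ≠ 0 := (Real.sqrt_pos.2 hs).ne'
  field_simp
  rw [Real.sq_sqrt hs.le, mul_comm]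

/-- The substitution `x = f u` in the Laplace integral of `x - log (1 + x)`. -/
lemma integral_phase_eq_gaussian {f y : ℝ → ℝ} (hf : ∀ u, -1 < f u)
    (hinv : ∀ u, phaseRoot (f u) = u) (hy : ∀ v, y v = if v = 0 then √2 / 2 else v / f v)
    {s : ℝ} (hs : 0 < s) :
    MeasureTheory.Integrable (fun u => y u * exp (-s * u ^ 2)) ∧
      ∫ x in Ioi (-1), exp (-s * (x - Real.log (1 + x))) =
        2 * ∫ u, y u * exp (-s * u ^ 2) := by
  set S : Set ℝ := Ioi (-1) \ {0} with hS
  have hSm : MeasurableSet S := measurableSet_Ioi.diff (measurableSet_singleton 0)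
  have himage : phaseRoot '' S = {0}ᶜ := by
    ext u
    constructor
    · rintro ⟨x, hx, rfl⟩
      exact phaseRoot_ne_zero hx.1 hx.2
    · intro hu
      refine ⟨f u, ⟨hf u, fun h => hu ?_⟩, hinv u⟩
      rw [mem_singleton_iff] at h ⊢
      rw [← hinv u, h, phaseRoot_zero]
  have hderiv : ∀ x ∈ S, HasDerivWithinAt phaseRoot (x / ((1 + x) * (2 * phaseRoot x))) S x :=
    fun x hx => (hasDerivAt_phaseRoot hx.1 hx.2).hasDerivWithinAt
  have hinj : InjOn phaseRoot S := injOn_phaseRoot.mono sdiff_subset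
  set F : ℝ → ℝ := fun u => 2 * (y u * exp (-s * u ^ 2)) + 2 * (u ^ 1 * exp (-s * u ^ 2)) with hF
  have hpoint : ∀ x ∈ S, |x / ((1 + x) * (2 * phaseRoot x))| • F (phaseRoot x) =
      exp (-s * (x - Real.log (1 + x))) := by
    rintro x ⟨hx, hx0⟩
    have hx' : 0 < 1 + x := by linarith [mem_Ioi.1 hx]
    have hx0 : x ≠ 0 := hx0
    have hg := phaseRoot_ne_zero hx hx0
    have hpos : 0 < x / ((1 + x) * (2 * phaseRoot x)) := by
      rw [show x / ((1 + x) * (2 * phaseRoot x)) =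
        x * phaseRoot x / ((1 + x) * (2 * phaseRoot x ^ 2)) by field_simp]
      have := phaseRoot_mul_self_pos hx hx0
      positivity
    have hfx : f (phaseRoot x) = x := injOn_phaseRoot (hf _) hx (hinv _)
    rw [abs_of_pos hpos, hF]
    simp only [hy, hg, if_false, hfx, phaseRoot_sq (mem_Ioi.1 hx), smul_eq_mul]
    field_simp
  have hae : (S : Set ℝ) =ᵐ[MeasureTheory.volume] Ioi (-1) :=
    MeasureTheory.sdiff_null_ae_eq_self (by simp)
  have hcompl : ({0}ᶜ : Set ℝ) =ᵐ[MeasureTheory.volume] univ := by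
    simp [MeasureTheory.ae_eq_univ]
  have hodd := (integrable_pow_mul_exp_neg_mul_sq hs 1).const_mul 2
  have hFint : MeasureTheory.Integrable F := by
    rw [← MeasureTheory.integrableOn_univ, ← MeasureTheory.integrableOn_congr_set_ae hcompl,
      ← himage, MeasureTheory.integrableOn_image_iff_integrableOn_abs_deriv_smul hSm hderiv hinj,
      MeasureTheory.integrableOn_congr_fun hpoint hSm]
    exact (Gamma_add_one_eq_integral_phase hs).1.mono_set sdiff_subset
  have hyint : MeasureTheory.Integrable (fun u => y u * exp (-s * u ^ 2)) := by
    convert! (hFint.sub hodd).div_const 2 using 2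
    simp [hF]
  refine ⟨hyint, ?_⟩
  rw [← MeasureTheory.setIntegral_congr_set hae,
    ← MeasureTheory.setIntegral_congr_fun hSm hpoint,
    ← MeasureTheory.integral_image_eq_integral_abs_deriv_smul hSm hderiv hinj, himage,
    MeasureTheory.setIntegral_congr_set hcompl, MeasureTheory.setIntegral_univ, hF,
    MeasureTheory.integral_add (hyint.const_mul 2) hodd, MeasureTheory.integral_const_mul,
    MeasureTheory.integral_const_mul, integral_odd_pow_mul_exp_neg_mul_sq s 0]
  ring

lemma isBigO_integral_mul_exp_neg_mul_sq {R : ℝ → ℝ} {n : ℕ}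
    (hint : ∀ s : ℝ, 0 < s → MeasureTheory.Integrable fun u => R u * exp (-s * u ^ 2))
    (hR : R =O[nhds 0] fun u => |u| ^ (2 * n + 1)) :
    (fun s : ℝ => ∫ u, R u * exp (-s * u ^ 2)) =O[atTop] fun s => s ^ (-((n : ℝ) + 1)) := by
  obtain ⟨C, hC, hbound⟩ := hR.exists_pos
  obtain ⟨δ, hδ, hball⟩ := Metric.eventually_nhds_iff.1 hbound.bound
  set K := ∫ u, |R u * exp (-1 * u ^ 2)| with hK
  have hmain : ∀ s : ℝ, 1 ≤ s → |∫ u, R u * exp (-s * u ^ 2)| ≤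
      C * Real.Gamma (n + 1) * s ^ (-((n : ℝ) + 1)) + exp (δ ^ 2) * K * exp (-δ ^ 2 * s) := by
    intro s hs
    have hs0 : 0 < s := by linarith
    have hmoment : MeasureTheory.Integrable fun u : ℝ => |u| ^ (2 * n + 1) * exp (-s * u ^ 2) := by
      simpa [abs_mul, abs_pow] using (integrable_pow_mul_exp_neg_mul_sq hs0 (2 * n + 1)).abs
    have hle : ∀ u, |R u * exp (-s * u ^ 2)| ≤ C * (|u| ^ (2 * n + 1) * exp (-s * u ^ 2)) +
        exp (-(s - 1) * δ ^ 2) * |R u * exp (-1 * u ^ 2)| := by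
      intro u
      rw [abs_mul, abs_mul, abs_of_pos (exp_pos _), abs_of_pos (exp_pos _)]
      rcases lt_or_ge |u| δ with hu | hu
      · have h := hball (by simpa using hu : dist u 0 < δ)
        simp only [Real.norm_eq_abs, abs_pow, abs_abs] at h
        have := mul_le_mul_of_nonneg_right h (exp_pos (-s * u ^ 2)).le
        have : 0 ≤ exp (-(s - 1) * δ ^ 2) * (|R u| * exp (-1 * u ^ 2)) := by positivity
        linarith
      · have hexp : exp (-s * u ^ 2) ≤ exp (-(s - 1) * δ ^ 2) * exp (-1 * u ^ 2) := by
          rw [← Real.exp_add, Real.exp_le_exp]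
          have : δ ^ 2 ≤ u ^ 2 := by simpa using pow_le_pow_left₀ hδ.le hu 2
          nlinarith
        have := mul_le_mul_of_nonneg_left hexp (abs_nonneg (R u))
        have : 0 ≤ C * (|u| ^ (2 * n + 1) * exp (-s * u ^ 2)) := by positivity
        linarith
    have h1 := hmoment.const_mul C
    have h2 := (hint 1 one_pos).abs.const_mul (exp (-(s - 1) * δ ^ 2))
    calc |∫ u, R u * exp (-s * u ^ 2)| ≤ ∫ u, |R u * exp (-s * u ^ 2)| :=
          MeasureTheory.abs_integral_le_integral_abs
      _ ≤ ∫ u, (C * (|u| ^ (2 * n + 1) * exp (-s * u ^ 2)) +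
            exp (-(s - 1) * δ ^ 2) * |R u * exp (-1 * u ^ 2)|) :=
          MeasureTheory.integral_mono (hint s hs0).abs (h1.add h2) hle
      _ = _ := by
          rw [MeasureTheory.integral_add h1 h2, MeasureTheory.integral_const_mul,
            MeasureTheory.integral_const_mul, integral_abs_pow_mul_exp_neg_mul_sq hs0, ← hK,
            show -(s - 1) * δ ^ 2 = δ ^ 2 + -δ ^ 2 * s by ring, Real.exp_add]
          push_cast
          rw [show -(2 * (n : ℝ) + 1 + 1) / 2 = -(n + 1) by ring,
            show (2 * (n : ℝ) + 1 + 1) / 2 = n + 1 by ring]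
          ring
  refine (IsBigO.of_norm_eventuallyLE (g := fun s : ℝ => C * Real.Gamma (n + 1) *
    s ^ (-((n : ℝ) + 1)) + exp (δ ^ 2) * K * exp (-δ ^ 2 * s)) ?_).trans ?_
  · filter_upwards [eventually_ge_atTop 1] with s hs
    exact hmain s hs
  · exact (isBigO_const_mul_self _ _ _).add
      ((isLittleO_exp_neg_mul_rpow_atTop (by positivity) _).isBigO.const_mul_left _)

lemma isLittleO_sqrt_mul_of_isBigO_rpow {I : ℝ → ℝ} {n : ℕ}
    (hI : I =O[atTop] fun s => s ^ (-((n : ℝ) + 1))) :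
    (fun s => √s * I s) =o[atTop] fun s => 1 / s ^ n := by
  have hlt : (fun s : ℝ => s ^ (-((n : ℝ) + 1 / 2))) =o[atTop] fun s => s ^ (-(n : ℝ)) := by
    refine isLittleO_of_tendsto' ?_ ((tendsto_rpow_neg_atTop (half_pos one_pos)).congr' ?_)
    · filter_upwards [eventually_gt_atTop 0] with s hs h
      exact absurd h (Real.rpow_pos_of_pos hs _).ne'
    · filter_upwards [eventually_gt_atTop 0] with s hs
      rw [← Real.rpow_sub hs]
      ring_nf
  refine (((isBigO_refl (fun s : ℝ => √s) atTop).mul hI).congr' EventuallyEq.rfl ?_).trans_isLittleO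
    (hlt.congr' EventuallyEq.rfl ?_)
  · filter_upwards [eventually_gt_atTop 0] with s hs
    rw [Real.sqrt_eq_rpow, ← Real.rpow_add hs]
    ring_nf
  · filter_upwards [eventually_gt_atTop 0] with s hs
    rw [Real.rpow_neg hs.le, Real.rpow_natCast, one_div]

theorem stmt_17 (f : ℝ → ℝ)
    (hf : ∀ u : ℝ, f u ∈ Set.Ioi (-1 : ℝ) ∧
      Real.sign (f u) * Real.sqrt (f u - Real.log (1 + f u)) = u)
    (y : ℝ → ℝ)
    (hy : ∀ v : ℝ, y v = if v = 0 then Real.sqrt 2 / 2 else v / f v)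
    (a : ℕ → ℝ)
    (ha : ∀ k : ℕ, a k = iteratedDeriv k y 0 / (Nat.factorial k))
    (n : ℕ) :
    (fun s : ℝ =>
        Real.Gamma (s + 1) / ((s / Real.exp 1) ^ s * Real.sqrt s) -
          ∑ k ∈ Finset.range (n + 1),
            2 * a (2 * k) * Real.Gamma ((k : ℝ) + 1/2) / s ^ k)
      =o[Filter.atTop] fun s : ℝ => 1 / s ^ n := by
  have hgt : ∀ u, -1 < f u := fun u => (hf u).1
  have hinv : ∀ u, phaseRoot (f u) = u := fun u => (hf u).2
  set R : ℝ → ℝ := fun u => y u - ∑ k ∈ range (2 * n + 1), a k * u ^ k with hR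
  have hRO : R =O[nhds 0] fun u => |u| ^ (2 * n + 1) := by
    simpa only [hR, ha] using
      (analyticAt_div_rightInverse hgt hinv hy).isBigO_sub_maclaurin (2 * n + 1)
  have hpoly := fun (s : ℝ) (hs : 0 < s) =>
    integrable_polynomial_mul_exp_neg_mul_sq hs a (2 * n + 1)
  have hyint := fun (s : ℝ) (hs : 0 < s) => (integral_phase_eq_gaussian hgt hinv hy hs).1
  have hint : ∀ s : ℝ, 0 < s → MeasureTheory.Integrable fun u => R u * exp (-s * u ^ 2) := by
    intro s hs
    simp only [hR, sub_mul]
    exact (hyint s hs).sub (hpoly s hs)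
  refine ((isLittleO_sqrt_mul_of_isBigO_rpow
    (isBigO_integral_mul_exp_neg_mul_sq hint hRO)).const_mul_left 2).congr' ?_ EventuallyEq.rfl
  filter_upwards [eventually_gt_atTop 0] with s hs
  have hsum := sqrt_mul_integral_polynomial_mul_exp_neg_mul_sq hs a n
  rw [Gamma_add_one_div_eq hs, (integral_phase_eq_gaussian hgt hinv hy hs).2]
  simp only [hR, sub_mul]
  rw [MeasureTheory.integral_sub (hyint s hs) (hpoly s hs), mul_sub, hsum, mul_sub, Finset.mul_sum]
  congr 1
  · ring
  · exact Finset.sum_congr rfl fun k _ => by ring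
end
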